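/- Under condition (A) (E[D|X] = λ(W+R) with D antisymmetric in the exchangeable pair (X,X')), the Kolmogorov distance between the law of W and the standard normal satisfies: sup_z |P(W ≤ z) - Φ(z)| ≤ E|1 - (1/(2λ)) E[DΔ | W]| + (1/λ) E|E[D*Δ | W]| + E|R|, where Δ = W - W' and D* is any symmetric function of (X,X') with D* ≥ |D|. -/

import Mathlib

open MeasureTheory ProbabilityTheory

/-- The standard normal distribution function. -/
noncomputable def stdNormalCDF (z : ℝ) : ℝ :=
  (ProbabilityTheory.gaussianReal 0 1 (Set.Iic z)).toReal

/-- Standard normal density. -/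
noncomputable def stdP (w : ℝ) : ℝ := gaussianPDFReal 0 1 w

lemma stdP_eq (w : ℝ) : stdP w = (√(2 * Real.pi))⁻¹ * Real.exp (-w ^ 2 / 2) := by
  simp [stdP, gaussianPDFReal]

lemma stdP_pos (w : ℝ) : 0 < stdP w := gaussianPDFReal_pos _ _ _ (by simp)

lemma stdP_neg (w : ℝ) : stdP (-w) = stdP w := by simp [stdP_eq]

lemma stdP_hasDerivAt (w : ℝ) : HasDerivAt stdP (-w * stdP w) w := by
  have h1 : HasDerivAt (fun w : ℝ => -w ^ 2 / 2) (-w) w := by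
    have := ((hasDerivAt_id w).pow 2).neg.div_const 2
    refine this.congr_deriv ?_
    simp
    ring
  have h2 := (h1.exp).const_mul ((√(2 * Real.pi))⁻¹)
  have h3 : stdP = fun w => (√(2 * Real.pi))⁻¹ * Real.exp (-w ^ 2 / 2) := funext stdP_eq
  rw [h3]
  refine h2.congr_deriv ?_
  ring

lemma stdP_cont : Continuous stdP :=
  continuous_iff_continuousAt.2 fun w => (stdP_hasDerivAt w).continuousAt

lemma cdf_eq_integral (w : ℝ) : stdNormalCDF w = ∫ x in Set.Iic w, stdP x := by
  unfold stdNormalCDF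
  rw [gaussianReal_apply_eq_integral 0 (by simp), ENNReal.toReal_ofReal]
  · rfl
  · exact integral_nonneg fun x => (gaussianPDFReal_nonneg _ _ _)

lemma stdP_int : Integrable stdP := integrable_gaussianPDFReal 0 1

lemma cdf_hasDerivAt (w : ℝ) : HasDerivAt stdNormalCDF (stdP w) w := by
  have h : stdNormalCDF = fun w => stdNormalCDF 0 + ∫ x in (0:ℝ)..w, stdP x := by
    funext w
    rw [intervalIntegral.integral_Iic_sub_Iic stdP_int.integrableOn stdP_int.integrableOn |>.symm,
      cdf_eq_integral, cdf_eq_integral]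
    ring
  rw [h]
  have := (stdP_cont.integral_hasStrictDerivAt 0 w).hasDerivAt
  exact this.const_add _

lemma cdf_cont : Continuous stdNormalCDF :=
  continuous_iff_continuousAt.2 fun w => (cdf_hasDerivAt w).continuousAt

lemma cdf_fun_eq (w : ℝ) : stdNormalCDF w = cdf (gaussianReal 0 1) w := by
  rw [cdf_eq_real]; rfl

lemma std_nonneg (w : ℝ) : 0 ≤ stdNormalCDF w := ENNReal.toReal_nonneg
lemma std_le_one (w : ℝ) : stdNormalCDF w ≤ 1 := by
  rw [cdf_fun_eq]; exact cdf_le_one _ _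
lemma std_mono : Monotone stdNormalCDF := by
  intro a b h
  rw [cdf_fun_eq, cdf_fun_eq]; exact monotone_cdf _ h
lemma std_tendsto : Filter.Tendsto stdNormalCDF Filter.atTop (nhds 1) := by
  rw [funext cdf_fun_eq]; exact tendsto_cdf_atTop _

lemma std_neg (w : ℝ) : stdNormalCDF (-w) = 1 - stdNormalCDF w := by
  have h1 : stdNormalCDF (-w) = ∫ x in Set.Ioi w, stdP x := by
    rw [cdf_eq_integral, ← integral_comp_neg_Ioi]
    simp [stdP_neg]
  have h2 : ∫ x, stdP x = 1 := integral_gaussianPDFReal_eq_one 0 (by simp)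
  have h3 := intervalIntegral.integral_Iic_add_Ioi (b := w) stdP_int.integrableOn stdP_int.integrableOn
  rw [h2] at h3
  rw [h1, cdf_eq_integral]; linarith

lemma stdP_tendsto : Filter.Tendsto stdP Filter.atTop (nhds 0) := by
  rw [funext stdP_eq]
  rw [show (0:ℝ) = (√(2 * Real.pi))⁻¹ * 0 by simp]
  apply Filter.Tendsto.const_mul
  apply Real.tendsto_exp_atBot.comp
  have : Filter.Tendsto (fun x : ℝ => x ^ 2 / 2) Filter.atTop Filter.atTop :=
    (Filter.tendsto_pow_atTop (by simp)).atTop_div_const (by simp)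
  have := Filter.tendsto_neg_atTop_atBot.comp this
  refine this.congr fun x => ?_
  simp [neg_div]

/-- An antitone function on `Ici a` tending to `0` is nonnegative. -/
lemma nonneg_of_deriv {u u' : ℝ → ℝ} {a : ℝ} (hu : ∀ x, a ≤ x → HasDerivAt u (u' x) x)
    (h : ∀ x, a ≤ x → u' x ≤ 0) (ht : Filter.Tendsto u Filter.atTop (nhds 0)) : 0 ≤ u a := by
  have hanti : AntitoneOn u (Set.Ici a) := by
    apply antitoneOn_of_deriv_nonpos (convex_Ici a)
    · exact fun x hx => (hu x hx).continuousAt.continuousWithinAt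
    · intro x hx
      rw [interior_Ici] at hx
      exact (hu x (le_of_lt hx)).differentiableAt.differentiableWithinAt
    · intro x hx
      rw [interior_Ici] at hx
      rw [(hu x (le_of_lt hx)).deriv]; exact h x (le_of_lt hx)
  refine le_of_tendsto ht ?_
  filter_upwards [Filter.eventually_ge_atTop a] with x hx
  exact hanti (Set.mem_Ici.2 le_rfl) hx hx

lemma mills_upper (w : ℝ) : w * (1 - stdNormalCDF w) ≤ stdP w := by
  rcases le_or_gt w 0 with hw | hw
  · have := std_le_one w
    have := stdP_pos w
    nlinarith
  · have key : 0 ≤ stdP w / w - (1 - stdNormalCDF w) := by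
      refine nonneg_of_deriv (u := fun w => stdP w / w - (1 - stdNormalCDF w))
        (u' := fun w => - stdP w / w ^ 2) ?_ ?_ ?_
      · intro x hx
        have hx0 : x ≠ 0 := (hw.trans_le hx).ne'
        have := ((stdP_hasDerivAt x).div (hasDerivAt_id x) hx0).sub ((cdf_hasDerivAt x).const_sub 1)
        refine this.congr_deriv ?_
        simp only [id]
        field_simp
        ring
      · intro x hx
        have := stdP_pos x
        rw [neg_div]
        have : 0 ≤ stdP x / x ^ 2 := by positivity
        linarith
      · have h1 : Filter.Tendsto (fun x : ℝ => stdP x / x) Filter.atTop (nhds 0) :=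
          stdP_tendsto.div_atTop Filter.tendsto_id
        have h2 := std_tendsto.const_sub 1
        simpa using h1.sub h2
    have h2 : 0 ≤ w * (stdP w / w - (1 - stdNormalCDF w)) := mul_nonneg hw.le key
    rw [mul_sub, mul_div_cancel₀ _ hw.ne'] at h2
    linarith

lemma mills_lower (w : ℝ) : w * stdP w ≤ (1 + w ^ 2) * (1 - stdNormalCDF w) := by
  have key : 0 ≤ (1 - stdNormalCDF w) - stdP w * (w / (1 + w ^ 2)) := by
    refine nonneg_of_deriv (u := fun w => (1 - stdNormalCDF w) - stdP w * (w / (1 + w ^ 2)))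
      (u' := fun w => - (2 * stdP w / (1 + w ^ 2) ^ 2)) ?_ ?_ ?_
    · intro x hx
      have hx0 : (1 + x ^ 2) ≠ 0 := by positivity
      have h1 : HasDerivAt (fun w : ℝ => 1 + w ^ 2) (2 * x) x := by
        simpa using ((hasDerivAt_id x).pow 2).const_add 1
      have := ((cdf_hasDerivAt x).const_sub 1).sub
        ((stdP_hasDerivAt x).mul ((hasDerivAt_id x).div h1 hx0))
      refine this.congr_deriv ?_
      simp only [id, Pi.div_apply]
      field_simp
      ring
    · intro x hx
      have := stdP_pos x
      have : 0 ≤ 2 * stdP x / (1 + x ^ 2) ^ 2 := by positivity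
      linarith
    · have h2 := std_tendsto.const_sub 1
      have h1 : Filter.Tendsto (fun w : ℝ => stdP w * (w / (1 + w ^ 2))) Filter.atTop (nhds 0) := by
        refine squeeze_zero_norm (a := stdP) ?_ stdP_tendsto
        intro x
        have h : |x / (1 + x ^ 2)| ≤ 1 := by
          rw [abs_div, abs_of_pos (show 0 < 1 + x ^ 2 by positivity), div_le_one (by positivity)]
          rw [abs_le]; constructor <;> nlinarith [sq_nonneg (x + 1), sq_nonneg (x - 1)]
        rw [Real.norm_eq_abs, abs_mul, abs_of_pos (stdP_pos x)]
        nlinarith [stdP_pos x]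
      simpa using h2.sub h1
  have h2 : 0 ≤ (1 + w ^ 2) * ((1 - stdNormalCDF w) - stdP w * (w / (1 + w ^ 2))) :=
    mul_nonneg (by positivity) key
  have h3 : (1 + w ^ 2) * ((1 - stdNormalCDF w) - stdP w * (w / (1 + w ^ 2)))
      = (1 + w ^ 2) * (1 - stdNormalCDF w) - w * stdP w := by
    field_simp
  linarith

lemma mills_upper' (w : ℝ) : - stdP w ≤ w * stdNormalCDF w := by
  have := mills_upper (-w)
  rw [std_neg, stdP_neg] at this
  linarith

lemma mills_lower' (w : ℝ) : 0 ≤ (1 + w ^ 2) * stdNormalCDF w + w * stdP w := by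
  have := mills_lower (-w)
  rw [std_neg, stdP_neg] at this
  nlinarith

lemma prod_le_aux (w : ℝ) (hw : 0 ≤ w) : stdNormalCDF w * (1 - stdNormalCDF w) ≤ stdP w := by
  rcases le_or_gt 1 w with h | h
  · have := mills_upper w
    have := std_le_one w
    have := std_nonneg w
    nlinarith
  · have h0 : stdNormalCDF 0 = 1 / 2 := by
      have := std_neg 0
      simp at this; linarith
    set s := √(2 * Real.pi) with hs
    have hs2 : s ^ 2 = 2 * Real.pi := Real.sq_sqrt (by positivity)
    have hspos : 0 < s := by positivity
    have hs3 : s ≤ 2.51 := by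
      have := Real.pi_lt_d2
      nlinarith
    have hA : s⁻¹ * 0.6 * w ≤ stdNormalCDF w - 1 / 2 := by
      have hm : MonotoneOn (fun w => stdNormalCDF w - s⁻¹ * 0.6 * w) (Set.Icc 0 1) := by
        have hd : ∀ x : ℝ, HasDerivAt (fun w => stdNormalCDF w - s⁻¹ * 0.6 * w)
            (stdP x - s⁻¹ * 0.6) x := fun x => by
          refine ((cdf_hasDerivAt x).sub ((hasDerivAt_id x).const_mul (s⁻¹ * 0.6))).congr_deriv ?_
          rw [mul_one]
        apply monotoneOn_of_deriv_nonneg (convex_Icc 0 1)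
        · exact fun x hx => (hd x).continuousAt.continuousWithinAt
        · exact fun x hx => (hd x).differentiableAt.differentiableWithinAt
        · intro x hx
          rw [interior_Icc] at hx
          rw [(hd x).deriv, stdP_eq, ← hs, ← mul_sub]
          apply mul_nonneg (by positivity)
          have h1 : Real.exp (-1/2) ≤ Real.exp (-x^2/2) := by
            apply Real.exp_le_exp.2
            nlinarith [hx.1, hx.2]
          have h2 : Real.exp (-1/2) * Real.exp (-1/2) = Real.exp (-1) := by
            rw [← Real.exp_add]; norm_num
          have h3 := Real.exp_neg_one_gt_d9
          have h4 := Real.exp_pos (-1/2)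
          by_contra hc
          push Not at hc
          have : Real.exp (-1/2) < 0.6 := by linarith
          nlinarith
      have := hm (Set.mem_Icc.2 ⟨le_rfl, zero_le_one⟩) (Set.mem_Icc.2 ⟨hw, h.le⟩) hw
      simp only [h0, mul_zero, sub_zero] at this
      linarith
    have hp : s⁻¹ * (1 - w ^ 2 / 2) ≤ stdP w := by
      rw [stdP_eq, ← hs]
      apply mul_le_mul_of_nonneg_left _ (by positivity)
      have := Real.add_one_le_exp (-w^2/2)
      linarith
    refine le_trans ?_ hp
    have hA0 : 0 ≤ s⁻¹ * 0.6 * w := by positivity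
    have hA2 : (s⁻¹ * 0.6 * w) ^ 2 ≤ (stdNormalCDF w - 1 / 2) ^ 2 := by gcongr
    have e1 : stdNormalCDF w * (1 - stdNormalCDF w) = 1/4 - (stdNormalCDF w - 1 / 2) ^ 2 := by ring
    rw [e1]
    have : 1/4 - (s⁻¹ * 0.6 * w) ^ 2 ≤ s⁻¹ * (1 - w ^ 2 / 2) := by
      have hsi : s⁻¹ * s = 1 := by field_simp
      set t := s⁻¹ with ht
      have htp : 0 < t := by positivity
      have ht1 : t ≥ 0.398 := by nlinarith
      have hw2 : w ^ 2 ≤ 1 := by nlinarith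
      have ht2 : t ≤ 0.4 := by
        have : s ≥ 2.5 := by
          have := Real.pi_gt_d2
          nlinarith
        nlinarith
      nlinarith [mul_nonneg (sub_nonneg.2 ht1) (sub_nonneg.2 hw2), sq_nonneg w, mul_nonneg (sub_nonneg.2 ht2) (sq_nonneg w), mul_nonneg (mul_nonneg htp.le (sub_nonneg.2 ht1)) (sq_nonneg w)]
    linarith

lemma prod_le (w : ℝ) : stdNormalCDF w * (1 - stdNormalCDF w) ≤ stdP w := by
  rcases le_total 0 w with h | h
  · exact prod_le_aux w h
  · have := prod_le_aux (-w) (by linarith)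
    rw [std_neg, stdP_neg] at this
    linarith

/-- Left and right branches of the Stein solution (times nothing). -/
noncomputable def steinL (z w : ℝ) : ℝ := (1 - stdNormalCDF z) * (stdNormalCDF w / stdP w)
noncomputable def steinR (z w : ℝ) : ℝ := stdNormalCDF z * ((1 - stdNormalCDF w) / stdP w)

/-- The Stein solution. -/
noncomputable def steinF (z w : ℝ) : ℝ := if w ≤ z then steinL z w else steinR z w

lemma steinLR (z : ℝ) : steinL z z = steinR z z := by
  unfold steinL steinR; ring

lemma steinF_left {z w : ℝ} (h : w ≤ z) : steinF z w = steinL z w := by simp [steinF, h]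
lemma steinF_right {z w : ℝ} (h : z ≤ w) : steinF z w = steinR z w := by
  rcases h.eq_or_lt with rfl | h
  · simp [steinF, steinLR]
  · simp [steinF, not_le.2 h]

lemma steinL_hasDerivAt (z w : ℝ) :
    HasDerivAt (steinL z) (w * steinL z w + (1 - stdNormalCDF z)) w := by
  have h := ((cdf_hasDerivAt w).div (stdP_hasDerivAt w) (stdP_pos w).ne').const_mul
    (1 - stdNormalCDF z)
  refine h.congr_deriv ?_
  have := (stdP_pos w).ne'
  unfold steinL
  field_simp
  ring

lemma steinR_hasDerivAt (z w : ℝ) :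
    HasDerivAt (steinR z) (w * steinR z w - stdNormalCDF z) w := by
  have h := (((cdf_hasDerivAt w).const_sub 1).div (stdP_hasDerivAt w) (stdP_pos w).ne').const_mul
    (stdNormalCDF z)
  refine h.congr_deriv ?_
  have := (stdP_pos w).ne'
  unfold steinR
  field_simp
  ring

lemma steinF_cont (z : ℝ) : Continuous (steinF z) := by
  refine Continuous.if_le ?_ ?_ continuous_id continuous_const ?_
  · exact continuous_iff_continuousAt.2 fun w => (steinL_hasDerivAt z w).continuousAt
  · exact continuous_iff_continuousAt.2 fun w => (steinR_hasDerivAt z w).continuousAt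
  · rintro x rfl; exact steinLR x

lemma steinF_bound (z w : ℝ) : |steinF z w| ≤ 1 := by
  have hp := stdP_pos w
  have h1 := prod_le w
  have a1 := std_nonneg w
  have a2 := std_le_one w
  have b1 := std_nonneg z
  have b2 := std_le_one z
  rcases le_total w z with h | h
  · have hm := std_mono h
    rw [steinF_left h, steinL, ← mul_div_assoc, abs_of_nonneg (by
      apply div_nonneg _ hp.le
      exact mul_nonneg (by linarith) a1), div_le_one hp]
    nlinarith
  · have hm := std_mono h
    rw [steinF_right h, steinR, ← mul_div_assoc, abs_of_nonneg (by
      apply div_nonneg _ hp.le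
      exact mul_nonneg b1 (by linarith)), div_le_one hp]
    nlinarith

lemma steinL_mono (z : ℝ) : Monotone fun w => w * steinL z w := by
  have hd : ∀ w, HasDerivAt (fun w => w * steinL z w)
      (1 * steinL z w + w * (w * steinL z w + (1 - stdNormalCDF z))) w := fun w =>
    (hasDerivAt_id w).mul (steinL_hasDerivAt z w)
  apply monotone_of_deriv_nonneg (fun w => (hd w).differentiableAt)
  intro w
  rw [(hd w).deriv]
  have hp := stdP_pos w
  have : 1 * steinL z w + w * (w * steinL z w + (1 - stdNormalCDF z))
    = (1 - stdNormalCDF z) * (((1 + w ^ 2) * stdNormalCDF w + w * stdP w) / stdP w) := by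
    unfold steinL; field_simp; ring
  rw [this]
  exact mul_nonneg (by linarith [std_le_one z]) (div_nonneg (mills_lower' w) hp.le)

lemma steinR_mono (z : ℝ) : Monotone fun w => w * steinR z w := by
  have hd : ∀ w, HasDerivAt (fun w => w * steinR z w)
      (1 * steinR z w + w * (w * steinR z w - stdNormalCDF z)) w := fun w =>
    (hasDerivAt_id w).mul (steinR_hasDerivAt z w)
  apply monotone_of_deriv_nonneg (fun w => (hd w).differentiableAt)
  intro w
  rw [(hd w).deriv]
  have hp := stdP_pos w
  have : 1 * steinR z w + w * (w * steinR z w - stdNormalCDF z)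
    = stdNormalCDF z * (((1 + w ^ 2) * (1 - stdNormalCDF w) - w * stdP w) / stdP w) := by
    unfold steinR; field_simp; ring
  rw [this]
  exact mul_nonneg (std_nonneg z) (div_nonneg (by linarith [mills_lower w]) hp.le)

lemma steinG_mono (z : ℝ) : Monotone fun w => w * steinF z w := by
  intro a b hab
  have hL := steinL_mono z
  have hR := steinR_mono z
  rcases le_total b z with hb | hb
  · simp only [steinF_left hb, steinF_left (hab.trans hb)]
    exact hL hab
  · rcases le_total a z with ha | ha
    · simp only [steinF_right hb, steinF_left ha]
      refine (hL ha).trans ?_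
      simp only [steinLR]
      exact hR hb
    · simp only [steinF_right hb, steinF_right ha]
      exact hR hab

lemma steinL_ge (z w : ℝ) : stdNormalCDF z - 1 ≤ w * steinL z w := by
  have hp := stdP_pos w
  have h : w * steinL z w = (1 - stdNormalCDF z) * (w * stdNormalCDF w / stdP w) := by
    unfold steinL; ring
  have h2 : -1 ≤ w * stdNormalCDF w / stdP w := by
    rw [le_div_iff₀ hp]; linarith [mills_upper' w]
  rw [h]
  nlinarith [std_le_one z]

lemma steinR_le (z w : ℝ) : w * steinR z w ≤ stdNormalCDF z := by
  have hp := stdP_pos w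
  have h : w * steinR z w = stdNormalCDF z * (w * (1 - stdNormalCDF w) / stdP w) := by
    unfold steinR; ring
  have h2 : w * (1 - stdNormalCDF w) / stdP w ≤ 1 := by
    rw [div_le_one hp]; linarith [mills_upper w]
  rw [h]
  nlinarith [std_nonneg z]

lemma steinG_ge (z w : ℝ) : stdNormalCDF z - 1 ≤ w * steinF z w := by
  rcases le_total w z with h | h
  · rw [steinF_left h]; exact steinL_ge z w
  · refine (steinL_ge z z).trans ?_
    have := steinG_mono z h
    simpa only [steinF_left le_rfl] using this

lemma steinG_le (z w : ℝ) : w * steinF z w ≤ stdNormalCDF z := by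
  rcases le_total z w with h | h
  · rw [steinF_right h]; exact steinR_le z w
  · refine le_trans ?_ (steinR_le z z)
    have := steinG_mono z h
    simpa only [steinF_right le_rfl] using this

/-- The (chosen) derivative of the Stein solution. -/
noncomputable def steinF' (z w : ℝ) : ℝ :=
  w * steinF z w + (if w ≤ z then 1 else 0) - stdNormalCDF z

/-- The monotone comparison function. -/
noncomputable def steinK (z w : ℝ) : ℝ :=
  w * steinF z w - (if w ≤ z then 1 else 0) + (1 - stdNormalCDF z)

/-- The right derivative of the Stein solution. -/
noncomputable def steinFr (z w : ℝ) : ℝ :=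
  w * steinF z w + (if w < z then 1 else 0) - stdNormalCDF z

lemma steinF'_bound (z w : ℝ) : |steinF' z w| ≤ 1 := by
  have h1 := steinG_ge z w
  have h2 := steinG_le z w
  have b1 := std_nonneg z
  have b2 := std_le_one z
  unfold steinF'
  rw [abs_le]
  split_ifs <;> constructor <;> linarith

lemma steinK_bound (z w : ℝ) : |steinK z w| ≤ 1 := by
  have h1 := steinG_ge z w
  have h2 := steinG_le z w
  have b1 := std_nonneg z
  have b2 := std_le_one z
  unfold steinK
  rw [abs_le]
  split_ifs <;> constructor <;> linarith

lemma steinF_deriv (z w : ℝ) : HasDerivWithinAt (steinF z) (steinFr z w) (Set.Ici w) w := by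
  rcases lt_or_ge w z with h | h
  · have h1 : HasDerivAt (steinF z) (steinFr z w) w := by
      have e : steinFr z w = w * steinL z w + (1 - stdNormalCDF z) := by
        simp [steinFr, h, steinF_left h.le]; ring
      rw [e]
      refine (steinL_hasDerivAt z w).congr_of_eventuallyEq ?_
      filter_upwards [Iio_mem_nhds h] with x hx
      exact steinF_left (le_of_lt hx)
    exact h1.hasDerivWithinAt
  · have e : steinFr z w = w * steinR z w - stdNormalCDF z := by
      simp [steinFr, not_lt.2 h, steinF_right h]
    rw [e]
    refine (steinR_hasDerivAt z w).hasDerivWithinAt.congr ?_ (steinF_right h)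
    intro x hx
    exact steinF_right (h.trans hx)

lemma steinF_taylor_aux (z a b c : ℝ) (hab : a ≤ b) (hc : c = a ∨ c = b) :
    |steinF z b - steinF z a - (b - a) * steinF' z c| ≤ (b - a) * (steinK z b - steinK z a) := by
  have key := norm_image_sub_le_of_norm_deriv_right_le_segment (a := a) (b := b)
    (f := fun t => steinF z t - t * steinF' z c) (f' := fun t => steinFr z t - steinF' z c)
    (C := steinK z b - steinK z a) ?_ ?_ ?_ b (Set.right_mem_Icc.2 hab)
  · rw [Real.norm_eq_abs] at key
    calc _ = |steinF z b - b * steinF' z c - (steinF z a - a * steinF' z c)| := by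
            congr 1; ring
      _ ≤ _ := key
      _ = _ := by ring
  · exact ((steinF_cont z).sub (continuous_id.mul continuous_const)).continuousOn
  · intro x hx
    have := (steinF_deriv z x).sub (((hasDerivAt_id x).mul_const (steinF' z c)).hasDerivWithinAt
      (s := Set.Ici x))
    refine this.congr_deriv ?_
    rw [one_mul]
  · intro x hx
    have m1 := steinG_mono z hx.1
    have m2 := steinG_mono z hx.2.le
    have h1 := hx.1
    have h2 := hx.2
    simp only at m1 m2
    rw [Real.norm_eq_abs]
    unfold steinK steinF' steinFr
    rcases hc with rfl | rfl <;> rw [abs_le] <;> split_ifs <;> constructor <;> linarith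

lemma steinF_taylor (z w w' : ℝ) :
    |steinF z w - steinF z w' - (w - w') * steinF' z w|
      ≤ (w - w') * (steinK z w - steinK z w') := by
  rcases le_total w' w with h | h
  · exact steinF_taylor_aux z w' w w h (Or.inr rfl)
  · have := steinF_taylor_aux z w w' w h (Or.inl rfl)
    rw [← abs_neg]
    calc _ = |steinF z w' - steinF z w - (w' - w) * steinF' z w| := by congr 1; ring
      _ ≤ _ := this
      _ = _ := by ring

lemma steinF_meas (z : ℝ) : Measurable (steinF z) := (steinF_cont z).measurable

lemma steinI_meas (z : ℝ) : Measurable (fun w : ℝ => if w ≤ z then (1:ℝ) else 0) :=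
  Measurable.ite measurableSet_Iic measurable_const measurable_const

lemma steinF'_meas (z : ℝ) : Measurable (steinF' z) :=
  ((measurable_id.mul (steinF_meas z)).add (steinI_meas z)).sub measurable_const

lemma steinK_meas (z : ℝ) : Measurable (steinK z) :=
  ((measurable_id.mul (steinF_meas z)).sub (steinI_meas z)).add measurable_const

lemma integral_mul_condExp_bdd {Ω : Type*} {m m0 : MeasurableSpace Ω} (hm : m ≤ m0)
    (μ : Measure Ω) [IsProbabilityMeasure μ] (V Y : Ω → ℝ) (hV : Measurable[m] V)
    (hb : ∀ ω, |V ω| ≤ 1) (hY : Integrable Y μ) :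
    ∫ ω, V ω * Y ω ∂μ = ∫ ω, V ω * (μ[Y | m]) ω ∂μ := by
  have h := condExp_stronglyMeasurable_mul_of_bound hm (μ := μ) hV.stronglyMeasurable hY 1
    (Filter.Eventually.of_forall hb)
  have h2 := integral_condExp (μ := μ) (f := V * Y) hm
  rw [integral_congr_ae h] at h2
  exact h2.symm

lemma abs_integral_mul_le {Ω : Type*} [MeasurableSpace Ω]
    (μ : Measure Ω) (V Y : Ω → ℝ)
    (hb : ∀ ω, |V ω| ≤ 1) (hY : Integrable Y μ) :
    |∫ ω, V ω * Y ω ∂μ| ≤ ∫ ω, |Y ω| ∂μ := by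
  refine (abs_integral_le_integral_abs).trans ?_
  refine integral_mono_of_nonneg (Filter.Eventually.of_forall fun _ => abs_nonneg _) hY.abs
    (Filter.Eventually.of_forall fun ω => ?_)
  simp only [abs_mul]
  have := abs_nonneg (Y ω)
  nlinarith [hb ω]

lemma integrable_bdd_mul {Ω : Type*} [MeasurableSpace Ω]
    {μ : Measure Ω} {V Y : Ω → ℝ} (hV : Measurable V)
    (hb : ∀ ω, |V ω| ≤ 1) (hY : Integrable Y μ) : Integrable (fun ω => V ω * Y ω) μ :=
  hY.bdd_mul (c := 1) hV.aestronglyMeasurable (Filter.Eventually.of_forall hb)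

/-- **Theorem 4.1.** Under condition (A) (`E[D|X] = λ(W+R)`, `D = F(X,X')`
antisymmetric, `(X,X')` exchangeable), with `Δ = W - W'`, `D* = F*(X,X')` symmetric and
`D* ≥ |D|`:
`sup_z |P(W ≤ z) - Φ(z)| ≤ E|1 - (1/(2λ)) E[DΔ | W]| + (1/λ) E|E[D*Δ | W]| + E|R|`. -/
theorem stmt3
    {Ω 𝒳 : Type*} [MeasurableSpace Ω] [MeasurableSpace 𝒳]
    (μ : Measure Ω) [IsProbabilityMeasure μ]
    (X X' : Ω → 𝒳) (hX : Measurable X) (hX' : Measurable X')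
    (hexch : Measure.map (fun ω => (X ω, X' ω)) μ
      = Measure.map (fun ω => (X' ω, X ω)) μ)
    (φ : 𝒳 → ℝ) (hφ : Measurable φ)
    (F Fstar : 𝒳 → 𝒳 → ℝ)
    (hF : Measurable (Function.uncurry F))
    (hFstar : Measurable (Function.uncurry Fstar))
    (hanti : ∀ x x', F x x' = - F x' x)
    (hsymm : ∀ x x', Fstar x x' = Fstar x' x)
    (W W' D Dstar Δ R : Ω → ℝ)
    (hW : W = fun ω => φ (X ω)) (hW' : W' = fun ω => φ (X' ω))
    (hD : D = fun ω => F (X ω) (X' ω))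
    (hDstar : Dstar = fun ω => Fstar (X ω) (X' ω))
    (hΔ : Δ = fun ω => W ω - W' ω)
    (hge : ∀ᵐ ω ∂μ, |D ω| ≤ Dstar ω)
    (hW0 : ∫ ω, W ω ∂μ = 0) (hW2 : ∫ ω, (W ω) ^ 2 ∂μ = 1)
    (l : ℝ) (hl : 0 < l)
    (hlin : μ[D | MeasurableSpace.comap X inferInstance]
      =ᵐ[μ] fun ω => l * (W ω + R ω))
    (hDint : Integrable D μ) (hRint : Integrable R μ)
    (hDΔint : Integrable (fun ω => D ω * Δ ω) μ)
    (hDsΔint : Integrable (fun ω => Dstar ω * Δ ω) μ) :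
    ∀ z : ℝ,
      |(μ {ω | W ω ≤ z}).toReal - stdNormalCDF z|
        ≤ (∫ ω, |1 - (1 / (2 * l)) *
              (μ[fun ω' => D ω' * Δ ω' | MeasurableSpace.comap W inferInstance]) ω| ∂μ)
          + (1 / l) * (∫ ω,
              |(μ[fun ω' => Dstar ω' * Δ ω' | MeasurableSpace.comap W inferInstance]) ω| ∂μ)
          + ∫ ω, |R ω| ∂μ := by
  intro z
  have hWm : Measurable W := by rw [hW]; exact hφ.comp hX
  have hW'm : Measurable W' := by rw [hW']; exact hφ.comp hX'
  have hmX : MeasurableSpace.comap X inferInstance ≤ (inferInstance : MeasurableSpace Ω) :=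
    hX.comap_le
  have hmW : MeasurableSpace.comap W inferInstance ≤ (inferInstance : MeasurableSpace Ω) :=
    hWm.comap_le
  have hWint : Integrable W μ := by
    have h2 : Integrable (fun ω => W ω ^ 2) μ := by
      by_contra hc
      rw [integral_undef hc] at hW2
      exact zero_ne_one hW2
    exact ((memLp_two_iff_integrable_sq hWm.aestronglyMeasurable).2 h2).integrable (by norm_num)
  -- exchangeability
  have swap : ∀ H : 𝒳 × 𝒳 → ℝ, Measurable H →
      ∫ ω, H (X ω, X' ω) ∂μ = ∫ ω, H (X' ω, X ω) ∂μ := by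
    intro H hH
    rw [← integral_map (φ := fun ω => (X ω, X' ω)) (hX.prodMk hX').aemeasurable
      hH.aestronglyMeasurable, hexch,
      integral_map (hX'.prodMk hX).aemeasurable hH.aestronglyMeasurable]
  -- abbreviations
  have bf : ∀ ω, |steinF z (W ω)| ≤ 1 := fun ω => steinF_bound z _
  have bf' : ∀ ω, |steinF' z (W ω)| ≤ 1 := fun ω => steinF'_bound z _
  have bfW' : ∀ ω, |steinF z (W' ω)| ≤ 1 := fun ω => steinF_bound z _
  have bk : ∀ ω, |steinK z (W ω)| ≤ 1 := fun ω => steinK_bound z _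
  have bkW' : ∀ ω, |steinK z (W' ω)| ≤ 1 := fun ω => steinK_bound z _
  have mf : Measurable fun ω => steinF z (W ω) := (steinF_meas z).comp hWm
  have mf' : Measurable fun ω => steinF' z (W ω) := (steinF'_meas z).comp hWm
  have mfW' : Measurable fun ω => steinF z (W' ω) := (steinF_meas z).comp hW'm
  have mk : Measurable fun ω => steinK z (W ω) := (steinK_meas z).comp hWm
  have mkW' : Measurable fun ω => steinK z (W' ω) := (steinK_meas z).comp hW'm
  have ifW := integrable_bdd_mul mf bf hWint
  have ifR := integrable_bdd_mul mf bf hRint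
  have ifD := integrable_bdd_mul mf bf hDint
  have ifDW' := integrable_bdd_mul mfW' bfW' hDint
  have if' : Integrable (fun ω => steinF' z (W ω)) μ := by
    simpa using integrable_bdd_mul mf' bf' (integrable_const (1:ℝ))
  have if'DΔ := integrable_bdd_mul mf' bf' hDΔint
  have ik := integrable_bdd_mul mk bk hDsΔint
  have ikW' := integrable_bdd_mul mkW' bkW' hDsΔint
  -- step 1 : Stein equation
  have s1 : (μ {ω | W ω ≤ z}).toReal - stdNormalCDF z
      = ∫ ω, steinF' z (W ω) ∂μ - ∫ ω, steinF z (W ω) * W ω ∂μ := by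
    have hs : MeasurableSet {ω | W ω ≤ z} := hWm measurableSet_Iic
    have e1 : (μ {ω | W ω ≤ z}).toReal = ∫ ω, Set.indicator {ω | W ω ≤ z} (fun _ => (1:ℝ)) ω ∂μ := by
      rw [integral_indicator_const _ hs]; simp [Measure.real]
    have i1 : Integrable (Set.indicator {ω | W ω ≤ z} (fun _ => (1:ℝ))) μ :=
      (integrable_const _).indicator hs
    have e2 : stdNormalCDF z = ∫ ω, stdNormalCDF z ∂μ := by simp
    rw [e1]
    nth_rw 1 [e2]
    rw [← integral_sub i1 (integrable_const _), ← integral_sub if' ifW]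
    congr 1
    funext ω
    unfold steinF'
    by_cases h : W ω ≤ z
    · simp [h]; ring
    · simp [h]; ring
  -- step 2 : linearity condition
  have s2 : ∫ ω, steinF z (W ω) * D ω ∂μ
      = l * ∫ ω, steinF z (W ω) * W ω ∂μ + l * ∫ ω, steinF z (W ω) * R ω ∂μ := by
    have mfX : Measurable[MeasurableSpace.comap X inferInstance] fun ω => steinF z (W ω) := by
      rw [hW]
      exact ((steinF_meas z).comp hφ).comp (comap_measurable X)
    rw [integral_mul_condExp_bdd hmX μ _ D mfX bf hDint]
    rw [← integral_const_mul, ← integral_const_mul,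
      ← integral_add (ifW.const_mul l) (ifR.const_mul l)]
    refine integral_congr_ae ?_
    filter_upwards [hlin] with ω hω
    rw [hω]; ring
  -- step 3 : antisymmetry
  have s3 : ∫ ω, steinF z (W' ω) * D ω ∂μ = - ∫ ω, steinF z (W ω) * D ω ∂μ := by
    have := swap (fun q => steinF z (φ q.2) * F q.1 q.2)
      (((steinF_meas z).comp (hφ.comp measurable_snd)).mul hF)
    rw [← integral_neg]
    simp only [hW, hW', hD]
    refine this.trans ?_
    congr 1
    funext ω
    simp only
    rw [hanti]; ring
  have s4 : ∫ ω, steinK z (W' ω) * (Dstar ω * Δ ω) ∂μ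
      = - ∫ ω, steinK z (W ω) * (Dstar ω * Δ ω) ∂μ := by
    have := swap (fun q => steinK z (φ q.2) * (Fstar q.1 q.2 * (φ q.1 - φ q.2)))
      (((steinK_meas z).comp (hφ.comp measurable_snd)).mul
        (hFstar.mul ((hφ.comp measurable_fst).sub (hφ.comp measurable_snd))))
    rw [← integral_neg]
    simp only [hΔ, hW, hW', hDstar]
    refine this.trans ?_
    congr 1
    funext ω
    simp only
    rw [hsymm]; ring
  -- the remainder
  set T : Ω → ℝ := fun ω => steinF z (W ω) * D ω - steinF z (W' ω) * D ω
    - steinF' z (W ω) * (D ω * Δ ω) with hT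
  have iT : Integrable T μ := (ifD.sub ifDW').sub if'DΔ
  have eT : ∫ ω, T ω ∂μ = 2 * ∫ ω, steinF z (W ω) * D ω ∂μ
      - ∫ ω, steinF' z (W ω) * (D ω * Δ ω) ∂μ := by
    have h1 := integral_sub (ifD.sub ifDW') if'DΔ
    have h2 := integral_sub ifD ifDW'
    simp only [Pi.sub_apply] at h1
    rw [hT, h1, h2, s3]; ring
  have bT : |∫ ω, T ω ∂μ| ≤ 2 * ∫ ω, |(μ[fun ω' => Dstar ω' * Δ ω' |
      MeasurableSpace.comap W inferInstance]) ω| ∂μ := by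
    have b1 : |∫ ω, T ω ∂μ| ≤ ∫ ω, (steinK z (W ω) * (Dstar ω * Δ ω)
        - steinK z (W' ω) * (Dstar ω * Δ ω)) ∂μ := by
      refine abs_integral_le_integral_abs.trans ?_
      refine integral_mono_ae iT.abs (ik.sub ikW') ?_
      filter_upwards [hge] with ω hω
      have ht := steinF_taylor z (W ω) (W' ω)
      have e : T ω = D ω * (steinF z (W ω) - steinF z (W' ω)
          - (W ω - W' ω) * steinF' z (W ω)) := by
        simp only [hT, hΔ]; ring
      have e2 : steinK z (W ω) * (Dstar ω * Δ ω) - steinK z (W' ω) * (Dstar ω * Δ ω)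
          = Dstar ω * ((W ω - W' ω) * (steinK z (W ω) - steinK z (W' ω))) := by
        simp only [hΔ]; ring
      simp only [e, e2, Pi.sub_apply, abs_mul (D ω)]
      exact mul_le_mul hω ht (abs_nonneg _) ((abs_nonneg _).trans hω)
    rw [integral_sub ik ikW', s4] at b1
    have mkm : Measurable[MeasurableSpace.comap W inferInstance] fun ω => steinK z (W ω) :=
      (steinK_meas z).comp (comap_measurable W)
    rw [integral_mul_condExp_bdd hmW μ _ _ mkm bk hDsΔint] at b1
    have b2 := abs_integral_mul_le μ _ (μ[fun ω' => Dstar ω' * Δ ω' |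
      MeasurableSpace.comap W inferInstance]) bk integrable_condExp
    have b3 := (le_abs_self _).trans b2
    linarith
  have bR := abs_integral_mul_le μ _ R bf hRint
  -- main term
  have iC : Integrable (fun ω => 1 - (1 / (2 * l)) *
      (μ[fun ω' => D ω' * Δ ω' | MeasurableSpace.comap W inferInstance]) ω) μ :=
    (integrable_const _).sub (integrable_condExp.const_mul _)
  have bM := abs_integral_mul_le μ _ _ bf' iC
  have eM : ∫ ω, steinF' z (W ω) * (1 - (1 / (2 * l)) *
      (μ[fun ω' => D ω' * Δ ω' | MeasurableSpace.comap W inferInstance]) ω) ∂μ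
      = ∫ ω, steinF' z (W ω) ∂μ
        - (1 / (2 * l)) * ∫ ω, steinF' z (W ω) * (D ω * Δ ω) ∂μ := by
    have mfm : Measurable[MeasurableSpace.comap W inferInstance] fun ω => steinF' z (W ω) :=
      (steinF'_meas z).comp (comap_measurable W)
    rw [integral_mul_condExp_bdd hmW μ _ _ mfm bf' hDΔint, ← integral_const_mul,
      ← integral_sub if' ((integrable_bdd_mul mf' bf' integrable_condExp).const_mul _)]
    congr 1
    funext ω
    ring
  have final : (μ {ω | W ω ≤ z}).toReal - stdNormalCDF z
      = (∫ ω, steinF' z (W ω) * (1 - (1 / (2 * l)) *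
      (μ[fun ω' => D ω' * Δ ω' | MeasurableSpace.comap W inferInstance]) ω) ∂μ)
      - (1 / (2 * l)) * ∫ ω, T ω ∂μ + ∫ ω, steinF z (W ω) * R ω ∂μ := by
    rw [s1, eM, eT, s2]
    field_simp
    ring
  rw [final]
  have hc : |(1 / (2 * l)) * ∫ ω, T ω ∂μ| ≤ (1 / l) * (∫ ω,
      |(μ[fun ω' => Dstar ω' * Δ ω' | MeasurableSpace.comap W inferInstance]) ω| ∂μ) := by
    rw [abs_mul, abs_of_pos (show 0 < 1 / (2 * l) by positivity)]
    refine (mul_le_mul_of_nonneg_left bT (by positivity)).trans (le_of_eq ?_)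
    field_simp
  refine (abs_add_le _ _).trans ?_
  refine add_le_add ((abs_sub _ _).trans ?_) bR
  exact add_le_add bM hc
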